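/- Let E be a measurable space, let μ_1, …, μ_M be probability measures on E, let w_1, …, w_M > 0 with Σ_i w_i = 1, and let μ = Σ_i w_i μ_i. Let κ be a Markov kernel on E with invariant measure μ (i.e., μ.bind κ = μ). Then for every bounded measurable h : E → ℝ with h ≥ 0: Σ_{i=1}^{M} w_i ( ∫_E (κ h)(x) dμ_i(x) − ∫_E h dμ )² ≤ ( Σ_{i=1}^{M} 1/w_i ) ( ∫_E h dμ )², where (κ h)(x) = ∫_E h(z) κ(x, dz). -/

import Mathlib

open MeasureTheory ProbabilityTheory

/-- A bounded measurable real-valued function. -/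
def IsBddMeasurable {E : Type*} [MeasurableSpace E] (f : E → ℝ) : Prop :=
  Measurable f ∧ ∃ C : ℝ, ∀ x, |f x| ≤ C

/-!
Write `m = ∫ h dμ` and let `aᵢ` be the mean of `κ h` under the `i`-th component. Invariance gives
`m = ∫ κ h dμ = ∑ wᵢ aᵢ`. All summands are nonnegative, so `wᵢ aᵢ ∈ [0, m]`; also
`wᵢ m ∈ [0, m]`. Hence `|wᵢ (aᵢ - m)| ≤ m`, that is, `wᵢ (aᵢ - m)² ≤ m² / wᵢ`.
-/

theorem mul_sub_sq_le_one_div_mul_sq {w a m : ℝ} (hw : 0 < w) (hw1 : w ≤ 1) (ha : 0 ≤ a)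
    (ham : w * a ≤ m) : w * (a - m) ^ 2 ≤ 1 / w * m ^ 2 := by
  have hwa : 0 ≤ w * a := mul_nonneg hw.le ha
  have hm : 0 ≤ m := hwa.trans ham
  have abs_sub_le : |w * a - w * m| ≤ m :=
    abs_sub_le_of_nonneg_of_le hwa ham (mul_nonneg hw.le hm) (mul_le_of_le_one_left hm hw1)
  calc w * (a - m) ^ 2 = 1 / w * (w * a - w * m) ^ 2 := by field_simp
    _ ≤ 1 / w * m ^ 2 := by
      gcongr 1 / w * ?_
      exact sq_le_sq' (abs_le.1 abs_sub_le).1 (abs_le.1 abs_sub_le).2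

theorem sum_mul_sub_sum_sq_le {ι : Type*} {s : Finset ι} {w a : ι → ℝ}
    (hw : ∀ i ∈ s, 0 < w i) (hw1 : ∀ i ∈ s, w i ≤ 1) (ha : ∀ i ∈ s, 0 ≤ a i) :
    ∑ i ∈ s, w i * (a i - ∑ j ∈ s, w j * a j) ^ 2
      ≤ (∑ i ∈ s, 1 / w i) * (∑ i ∈ s, w i * a i) ^ 2 := by
  rw [Finset.sum_mul]
  refine Finset.sum_le_sum fun i hi ↦
    mul_sub_sq_le_one_div_mul_sq (hw i hi) (hw1 i hi) (ha i hi) ?_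
  exact Finset.single_le_sum (f := fun j ↦ w j * a j)
    (fun j hj ↦ mul_nonneg (hw j hj).le (ha j hj)) hi

section Mixture

variable {ι E : Type*} [Fintype ι] [MeasurableSpace E] {w : ι → ℝ} {μ : ι → Measure E}

/-- The mixture `∑ i, w i • μ i` of the measures `μ i` with real weights `w i`; a negative weight
counts as `0`. -/
noncomputable def mixture (w : ι → ℝ) (μ : ι → Measure E) : Measure E :=
  ∑ i, ENNReal.ofReal (w i) • μ i

instance isFiniteMeasure_mixture [∀ i, IsFiniteMeasure (μ i)] : IsFiniteMeasure (mixture w μ) :=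
  have (i : ι) : IsFiniteMeasure (ENNReal.ofReal (w i) • μ i) :=
    (μ i).smul_finite ENNReal.ofReal_ne_top
  inferInstanceAs (IsFiniteMeasure (∑ i, ENNReal.ofReal (w i) • μ i))

theorem ae_of_ae_mixture {p : E → Prop} (hp : ∀ᵐ x ∂mixture w μ, p x) {i : ι} (hi : 0 < w i) :
    ∀ᵐ x ∂μ i, p x := by
  rw [mixture, ae_finsetSum_measure_iff] at hp
  exact (Measure.absolutelyContinuous_smul (ENNReal.ofReal_pos.2 hi).ne').ae_le
    (hp i (Finset.mem_univ i))

theorem integral_mixture {G : Type*} [NormedAddCommGroup G] [NormedSpace ℝ G] {f : E → G}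
    (hw : ∀ i, 0 ≤ w i) (hf : Integrable f (mixture w μ)) :
    ∫ x, f x ∂mixture w μ = ∑ i, w i • ∫ x, f x ∂μ i := by
  rw [mixture, integral_finsetSum_measure (integrable_finsetSum_measure.1 hf)]
  simp only [integral_smul_measure, ENNReal.toReal_ofReal (hw _)]

theorem sum_mul_integral_sub_integral_mixture_sq_le {f : E → ℝ}
    (hw : ∀ i, 0 < w i) (hw1 : ∀ i, w i ≤ 1) (hf : Integrable f (mixture w μ))
    (hf0 : 0 ≤ᵐ[mixture w μ] f) :
    ∑ i, w i * ((∫ x, f x ∂μ i) - ∫ x, f x ∂mixture w μ) ^ 2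
      ≤ (∑ i, 1 / w i) * (∫ x, f x ∂mixture w μ) ^ 2 := by
  simp only [integral_mixture (fun i ↦ (hw i).le) hf, smul_eq_mul]
  exact sum_mul_sub_sum_sq_le (fun i _ ↦ hw i) (fun i _ ↦ hw1 i)
    fun i _ ↦ integral_nonneg_of_ae (ae_of_ae_mixture hf0 (hw i))

end Mixture

section KernelComp

variable {E F G : Type*} [MeasurableSpace E] [MeasurableSpace F] [NormedAddCommGroup G]
  [NormedSpace ℝ G] {κ : Kernel E F} {μ : Measure E} {f : F → G}

theorem integrable_integral_of_integrable_comp (hf : Integrable f (κ ∘ₘ μ)) :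
    Integrable (fun x ↦ ∫ y, f y ∂κ x) μ := by
  rw [Measure.comp_eq_comp_const_apply] at hf
  exact hf.integral_comp

theorem integral_measure_comp (hf : Integrable f (κ ∘ₘ μ)) :
    ∫ y, f y ∂(κ ∘ₘ μ) = ∫ x, ∫ y, f y ∂κ x ∂μ := by
  rw [Measure.comp_eq_comp_const_apply] at hf ⊢
  rw [Kernel.integral_comp hf, Kernel.const_apply]

end KernelComp

theorem IsBddMeasurable.integrable {E : Type*} [MeasurableSpace E] {μ : Measure E}
    [IsFiniteMeasure μ] {f : E → ℝ} (hf : IsBddMeasurable f) : Integrable f μ :=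
  let ⟨hmeas, C, hC⟩ := hf
  .of_bound hmeas.aestronglyMeasurable C (ae_of_all μ hC)

theorem stmt_7_general {ι E F : Type*} [Fintype ι] [MeasurableSpace E] [MeasurableSpace F]
    {w : ι → ℝ} (hw : ∀ i, 0 < w i) (hw1 : ∀ i, w i ≤ 1) {μ : ι → Measure E} {κ : Kernel E F}
    {h : F → ℝ} (hint : Integrable h (κ ∘ₘ mixture w μ)) (h0 : 0 ≤ᵐ[κ ∘ₘ mixture w μ] h) :
    ∑ i, w i * ((∫ x, ∫ z, h z ∂κ x ∂μ i) - ∫ z, h z ∂(κ ∘ₘ mixture w μ)) ^ 2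
      ≤ (∑ i, 1 / w i) * (∫ z, h z ∂(κ ∘ₘ mixture w μ)) ^ 2 := by
  rw [integral_measure_comp hint]
  refine sum_mul_integral_sub_integral_mixture_sq_le hw hw1
    (integrable_integral_of_integrable_comp hint) ?_
  filter_upwards [Measure.ae_ae_of_ae_comp h0] with x hx using integral_nonneg_of_ae hx

theorem stmt_7 {E : Type*} [MeasurableSpace E] (M : ℕ)
    (μc : Fin M → Measure E) [∀ i, IsProbabilityMeasure (μc i)]
    (w : Fin M → ℝ) (hw : ∀ i, 0 < w i) (hwsum : ∑ i, w i = 1)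
    (μ : Measure E) (hμ : μ = ∑ i, ENNReal.ofReal (w i) • μc i)
    (κ : Kernel E E) [IsMarkovKernel κ] (hinv : μ.bind (fun x => κ x) = μ) :
    ∀ h : E → ℝ, IsBddMeasurable h → (∀ x, 0 ≤ h x) →
      ∑ i, w i * ((∫ x, (∫ z, h z ∂(κ x)) ∂(μc i)) - ∫ x, h x ∂μ) ^ 2
        ≤ (∑ i, 1 / w i) * (∫ x, h x ∂μ) ^ 2 := by
  intro h hbdd h0
  obtain rfl : μ = mixture w μc := hμ
  have weight_le_one (i : Fin M) : w i ≤ 1 :=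
    hwsum ▸ Finset.single_le_sum (fun j _ ↦ (hw j).le) (Finset.mem_univ i)
  have comp_eq : κ ∘ₘ mixture w μc = mixture w μc := hinv
  simpa only [comp_eq] using stmt_7_general (μ := μc) (κ := κ) hw weight_le_one
    (comp_eq.symm ▸ hbdd.integrable) (ae_of_all _ h0)
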